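/- Let b ≥ 3, let P ⊆ ℝ^b be a two-dimensional linear subspace on which q is positive definite, let P^⊥ = {v ∈ ℝ^b : ⟨v, p⟩ = 0 for all p ∈ P} be its q-orthogonal complement, let Λ ⊆ ℝ^b be a countable additive subgroup, and let H be a proper linear subspace of the real vector space Hom_ℝ(P, P^⊥). Then there exists α ∈ P^⊥ such that: q(α) > 0; (P + ℝα)^⊥ ∩ Λ = {0}; and the subspace {f ∈ Hom_ℝ(P, P^⊥) : range f ⊆ ℝα} is not contained in H. (In particular, through any point of the period domain and in any tangent direction transverse to a given hyperplane there passes a generic twistor line.) -/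

import Mathlib

noncomputable section

open scoped BigOperators

def eps {b : ℕ} (i : Fin b) : ℝ := if (i : ℕ) < 3 then 1 else -1

def bR {b : ℕ} (v w : Fin b → ℝ) : ℝ := ∑ i, eps i * v i * w i

def qR {b : ℕ} (v : Fin b → ℝ) : ℝ := bR v v

def bC {b : ℕ} (z w : Fin b → ℂ) : ℂ := ∑ i, (eps i : ℂ) * z i * w i

def qC {b : ℕ} (z : Fin b → ℂ) : ℂ := bC z z

def conjVec {b : ℕ} (z : Fin b → ℂ) : Fin b → ℂ := fun i => (starRingEnd ℂ) (z i)

def rePart {b : ℕ} (z : Fin b → ℂ) : Fin b → ℝ := fun i => (z i).re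
def imPart {b : ℕ} (z : Fin b → ℂ) : Fin b → ℝ := fun i => (z i).im

def cplx {b : ℕ} (v : Fin b → ℝ) : Fin b → ℂ := fun i => (v i : ℂ)

def isPeriodVec {b : ℕ} (z : Fin b → ℂ) : Prop :=
  qC z = 0 ∧ 0 < (bC z (conjVec z)).re

instance projectivizationTopology (K V : Type*) [DivisionRing K] [AddCommGroup V] [Module K V]
    [TopologicalSpace V] : TopologicalSpace (Projectivization K V) :=
  inferInstanceAs (TopologicalSpace (Quotient (projectivizationSetoid K V)))

def periodDomain (b : ℕ) : Set (Projectivization ℂ (Fin b → ℂ)) :=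
  {x | ∃ (z : Fin b → ℂ) (hz : z ≠ 0), Projectivization.mk ℂ z hz = x ∧ isPeriodVec z}

def Pspan {b : ℕ} (z : Fin b → ℂ) : Submodule ℝ (Fin b → ℝ) :=
  Submodule.span ℝ {rePart z, imPart z}

def PosDefOn {b : ℕ} (W : Submodule ℝ (Fin b → ℝ)) : Prop :=
  ∀ v ∈ W, v ≠ 0 → 0 < qR v

def twistorLine {b : ℕ} (W : Submodule ℝ (Fin b → ℝ)) :
    Set (Projectivization ℂ (Fin b → ℂ)) :=
  {x | ∃ (z : Fin b → ℂ) (hz : z ≠ 0), Projectivization.mk ℂ z hz = x ∧ isPeriodVec z ∧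
    rePart z ∈ W ∧ imPart z ∈ W}

/-- `W^⊥ ∩ Λ = {0}`: the twistor line / three-space `W` is generic w.r.t. `Λ`. -/
def IsGenericW {b : ℕ} (Λ : AddSubgroup (Fin b → ℝ)) (W : Submodule ℝ (Fin b → ℝ)) : Prop :=
  ∀ α ∈ Λ, (∀ w ∈ W, bR α w = 0) → α = 0

def bRlin {b : ℕ} (p : Fin b → ℝ) : (Fin b → ℝ) →ₗ[ℝ] ℝ where
  toFun v := bR v p
  map_add' x y := by
    unfold bR
    rw [← Finset.sum_add_distrib]
    exact Finset.sum_congr rfl fun i _ => by simp [Pi.add_apply]; ring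
  map_smul' c x := by
    show bR (c • x) p = (RingHom.id ℝ) c • bR x p
    unfold bR
    rw [RingHom.id_apply, smul_eq_mul, Finset.mul_sum]
    exact Finset.sum_congr rfl fun i _ => by simp [Pi.smul_apply]; ring

def perpSubmodule {b : ℕ} (P : Submodule ℝ (Fin b → ℝ)) : Submodule ℝ (Fin b → ℝ) :=
  ⨅ p ∈ P, LinearMap.ker (bRlin p)

noncomputable def BB (b : ℕ) : LinearMap.BilinForm ℝ (Fin b → ℝ) :=
  LinearMap.mk₂ ℝ (fun v w => bR v w)
    (fun x y p => (bRlin p).map_add x y) (fun c x p => (bRlin p).map_smul c x)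
    (fun p x y => by
      unfold bR
      rw [← Finset.sum_add_distrib]
      exact Finset.sum_congr rfl fun i _ => by simp [Pi.add_apply]; ring)
    (fun c p x => by
      unfold bR
      rw [smul_eq_mul, Finset.mul_sum]
      exact Finset.sum_congr rfl fun i _ => by simp [Pi.smul_apply]; ring)

lemma BB_apply {b : ℕ} (v w : Fin b → ℝ) : BB b v w = bR v w := rfl

lemma bR_comm {b : ℕ} (v w : Fin b → ℝ) : bR v w = bR w v :=
  Finset.sum_congr rfl fun i _ => by ring

lemma mem_perp {b : ℕ} (P : Submodule ℝ (Fin b → ℝ)) (v : Fin b → ℝ) :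
    v ∈ perpSubmodule P ↔ ∀ p ∈ P, bR v p = 0 := by
  simp only [perpSubmodule, Submodule.mem_iInf, LinearMap.mem_ker]
  rfl

lemma bR_nondeg {b : ℕ} (v : Fin b → ℝ) (h : ∀ w, bR v w = 0) : v = 0 := by
  funext i
  have := h (Pi.single i 1)
  simp only [bR, Pi.single_apply, mul_ite, mul_one, mul_zero, Finset.sum_ite_eq',
    Finset.mem_univ, if_true] at this
  have he : eps i ≠ 0 := by unfold eps; split_ifs <;> norm_num
  simpa [he] using this

lemma perp_sup {b : ℕ} (P : Submodule ℝ (Fin b → ℝ)) (hpos : PosDefOn P) :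
    P ⊔ perpSubmodule P = ⊤ := by
  let T : (Fin b → ℝ) →ₗ[ℝ] (P →ₗ[ℝ] ℝ) := (BB b).compl₁₂ LinearMap.id P.subtype
  have hT : ∀ v p, T v p = bR v p := fun _ _ => rfl
  have hker : LinearMap.ker T = perpSubmodule P := by
    ext v
    rw [mem_perp, LinearMap.mem_ker]
    constructor
    · intro h p hp
      have := hT v ⟨p, hp⟩
      rw [h] at this; exact this.symm
    · intro h; ext p; exact h p p.2
  have hinj : Function.Injective (T ∘ₗ P.subtype) := by
    rw [injective_iff_map_eq_zero]
    intro p hp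
    by_contra hne
    have h1 := hpos p p.2 (by simpa using hne)
    have h2 : T p p = 0 := by
      have : T p = 0 := hp
      rw [this]; rfl
    rw [hT] at h2
    unfold qR at h1
    linarith
  have hsurj : Function.Surjective (T ∘ₗ P.subtype) :=
    (LinearMap.injective_iff_surjective_of_finrank_eq_finrank
      (Subspace.dual_finrank_eq (K := ℝ) (V := P)).symm).1 hinj
  rw [eq_top_iff]
  intro x _
  obtain ⟨p, hp⟩ := hsurj (T x)
  rw [Submodule.mem_sup]
  refine ⟨p, p.2, x - p, ?_, by abel⟩
  rw [← hker, LinearMap.mem_ker, map_sub, ← hp]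
  simp

lemma exists_pos {b : ℕ} (hb : 3 ≤ b) (P : Submodule ℝ (Fin b → ℝ))
    (hdim : Module.finrank ℝ ↥P = 2) : ∃ v ∈ perpSubmodule P, 0 < qR v := by
  let E : (Fin 3 → ℝ) →ₗ[ℝ] (Fin b → ℝ) :=
    { toFun := fun v i => if h : (i : ℕ) < 3 then v ⟨i, h⟩ else 0
      map_add' := fun x y => by ext i; by_cases h : (i : ℕ) < 3 <;> simp [h]
      map_smul' := fun c x => by ext i; by_cases h : (i : ℕ) < 3 <;> simp [h] }
  have hE : ∀ v i, E v i = if h : (i : ℕ) < 3 then v ⟨i, h⟩ else 0 := fun _ _ => rfl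
  let T : (Fin 3 → ℝ) →ₗ[ℝ] (P →ₗ[ℝ] ℝ) := (BB b).compl₁₂ E P.subtype
  have hT : ∀ v p, T v p = bR (E v) p := fun _ _ => rfl
  have hk : LinearMap.ker T ≠ ⊥ := by
    apply LinearMap.ker_ne_bot_of_finrank_lt
    have : Module.finrank ℝ (P →ₗ[ℝ] ℝ) = 2 := hdim ▸ Subspace.dual_finrank_eq (K := ℝ) (V := P)
    rw [this]; simp
  obtain ⟨v, hv, hv0⟩ := (Submodule.ne_bot_iff _).1 hk
  refine ⟨E v, ?_, ?_⟩
  · rw [mem_perp]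
    intro p hp
    have := hT v ⟨p, hp⟩
    rw [LinearMap.mem_ker.1 hv] at this; exact this.symm
  · obtain ⟨j, hj⟩ := Function.ne_iff.1 hv0
    unfold qR bR
    apply Finset.sum_pos'
    · intro i _
      by_cases h : (i : ℕ) < 3
      · simp [eps, h, mul_self_nonneg]
      · simp [hE, h]
    · refine ⟨Fin.castLE hb j, Finset.mem_univ _, ?_⟩
      have h : ((Fin.castLE hb j : Fin b) : ℕ) < 3 := j.2
      have h2 : E v (Fin.castLE hb j) = v j := by simp [hE]
      rw [h2]
      simp only [eps, h, if_true, one_mul]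
      exact mul_self_pos.2 hj

theorem stmt11 (b : ℕ) (hb : 3 ≤ b) (P : Submodule ℝ (Fin b → ℝ))
    (hdim : Module.finrank ℝ ↥P = 2) (hpos : PosDefOn P)
    (Λ : AddSubgroup (Fin b → ℝ)) (hΛ : (Λ : Set (Fin b → ℝ)).Countable)
    (H : Submodule ℝ (↥P →ₗ[ℝ] ↥(perpSubmodule P))) (hH : H ≠ ⊤) :
    ∃ α : Fin b → ℝ, α ∈ perpSubmodule P ∧ 0 < qR α ∧
      IsGenericW Λ (P ⊔ Submodule.span ℝ {α}) ∧
      ∃ f : ↥P →ₗ[ℝ] ↥(perpSubmodule P),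
        (∀ p : ↥P, (f p : Fin b → ℝ) ∈ Submodule.span ℝ {α}) ∧ f ∉ H := by
  let V := perpSubmodule P
  -- some functional `φ` and vector `w` with `φ ⊗ w ∉ H`
  have hφ : ∃ (φ : P →ₗ[ℝ] ℝ) (w : V), φ.smulRight w ∉ H := by
    by_contra! hcon
    apply hH
    rw [eq_top_iff]
    intro f _
    let e := Module.finBasis ℝ P
    have : f = ∑ i, (e.coord i).smulRight (f (e i)) := by
      apply e.ext
      intro j
      simp [LinearMap.sum_apply, Finsupp.single_apply]
    rw [this]
    exact Submodule.sum_mem _ fun i _ => hcon _ _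
  obtain ⟨φ, w, hw⟩ := hφ
  let K : Submodule ℝ V := H.comap (LinearMap.smulRightₗ φ)
  have hK : K ≠ ⊤ := by
    intro h
    have : w ∈ K := h ▸ Submodule.mem_top
    exact hw this
  let S : Set (Fin b → ℝ) := {l | l ∈ Λ ∧ l ∈ V ∧ l ≠ 0}
  have hS : S.Countable := hΛ.mono fun l hl => hl.1
  let N : (Fin b → ℝ) → Submodule ℝ V := fun l => LinearMap.ker ((BB b l) ∘ₗ V.subtype)
  have hN : ∀ l ∈ S, N l ≠ ⊤ := by
    rintro l ⟨-, hlV, hl0⟩ h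
    apply hl0
    apply bR_nondeg
    intro x
    have hx : x ∈ P ⊔ perpSubmodule P := perp_sup P hpos ▸ Submodule.mem_top
    obtain ⟨p, hp, v, hv, rfl⟩ := Submodule.mem_sup.1 hx
    have h1 : bR l p = 0 := (mem_perp P l).1 hlV p hp
    have h2 : (⟨v, hv⟩ : V) ∈ N l := h ▸ Submodule.mem_top
    have h3 : BB b l v = 0 := h2
    rw [← BB_apply, map_add, h3, BB_apply, h1, add_zero]
  have hopen : ∀ M : Submodule ℝ V, IsOpen ((M : Set V)ᶜ) := fun M =>
    (M.closed_of_finiteDimensional).isOpen_compl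
  have hdense : ∀ M : Submodule ℝ V, M ≠ ⊤ → Dense ((M : Set V)ᶜ) := fun M hM => by
    rw [← interior_eq_empty_iff_dense_compl, ← Set.not_nonempty_iff_eq_empty]
    exact fun h => hM (M.eq_top_of_nonempty_interior' h)
  have hd1 : Dense (⋂ l ∈ S, ((N l : Set V)ᶜ)) :=
    dense_biInter_of_isOpen (fun l _ => hopen _) hS
      fun l hl => hdense _ (hN l hl)
  have hd2 : Dense ((K : Set V)ᶜ ∩ ⋂ l ∈ S, ((N l : Set V)ᶜ)) :=
    (hdense K hK).inter_of_isOpen_left hd1 (hopen K)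
  have hcont : Continuous fun v : V => qR (v : Fin b → ℝ) := by
    unfold qR bR
    have hc : ∀ i, Continuous fun v : V => (v : Fin b → ℝ) i := fun i =>
      (continuous_apply i).comp continuous_subtype_val
    exact continuous_finsetSum _ fun i _ => (continuous_const.mul (hc i)).mul (hc i)
  obtain ⟨v0, hv0, hq0⟩ := exists_pos hb P hdim
  obtain ⟨α, hα, hαK, hαN⟩ := hd2.inter_open_nonempty {v : V | 0 < qR (v : Fin b → ℝ)}
    (isOpen_lt continuous_const hcont) ⟨⟨v0, hv0⟩, hq0⟩
  refine ⟨α, α.2, hα, ?_, φ.smulRight α, ?_, hαK⟩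
  · intro l hl hperp
    by_contra hl0
    have hlV : l ∈ V := (mem_perp P l).2 fun p hp => hperp p (Submodule.mem_sup_left hp)
    have := Set.mem_iInter₂.1 hαN l ⟨hl, hlV, hl0⟩
    apply this
    exact hperp α (Submodule.mem_sup_right (Submodule.mem_span_singleton_self _))
  · intro p
    exact Submodule.mem_span_singleton.2 ⟨φ p, rfl⟩
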